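/- Let H be a finite simple graph with vertex set {1,…,v} (v ≥ 2), edge set E(H) and maximum degree Δ, let L > 0, and let φ:𝒳^v→[−L,L] be any function on a set 𝒳. Suppose {Qₙ} is a sequence of symmetric n×n real matrices with zero diagonal satisfying limsup_{n→∞} n^{−2}Σ_{i,j=1}^n |Qₙ(i,j)|^{qΔ} < ∞ for some q > 1. Then lim_{n→∞} n^{−v} · sup over (x₁,…,xₙ) ∈ 𝒳ⁿ of | Σ_{(i₁,…,i_v)∈S(n,v)} φ(x_{i₁},…,x_{i_v}) Π_{(a,b)∈E(H)} Qₙ(i_a,i_b) − Σ_{(i₁,…,i_v)∈[n]^v} φ(x_{i₁},…,x_{i_v}) Π_{(a,b)∈E(H)} Qₙ(i_a,i_b) | = 0. -/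

import Mathlib

open MeasureTheory Filter Set
open scoped ENNReal NNReal

noncomputable section

/-- The uniform probability measure on `[0,1]`. -/
def unif01 : Measure ℝ := volume.restrict (Set.Icc 0 1)

instance : IsProbabilityMeasure unif01 :=
  ⟨by rw [unif01, Measure.restrict_apply_univ, Real.volume_Icc]; norm_num⟩

/-- The `L^r` norm (`r : ℝ≥0∞`) of a kernel, viewed as a function on `[0,1]²`. -/
def kerNorm (W : ℝ → ℝ → ℝ) (r : ℝ≥0∞) : ℝ≥0∞ :=
  eLpNorm (fun z : ℝ × ℝ => W z.1 z.2) r (unif01.prod unif01)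

/-- The (strong) cut distance `d_□` between two kernels on `[0,1]²`. -/
def cutDist (W₁ W₂ : ℝ → ℝ → ℝ) : ℝ :=
  ⨆ S : {S : Set ℝ // MeasurableSet S}, ⨆ T : {T : Set ℝ // MeasurableSet T},
    |∫ x in Set.Icc (0:ℝ) 1 ∩ S.1, ∫ y in Set.Icc (0:ℝ) 1 ∩ T.1, (W₁ x y - W₂ x y)|

/-- A Lebesgue-measure-preserving bijection of `[0,1]`. -/
def MPB (σ : ℝ → ℝ) : Prop :=
  Set.BijOn σ (Set.Icc 0 1) (Set.Icc 0 1) ∧ MeasurePreserving σ unif01 unif01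

/-- The weak cut distance `δ_□`. -/
def weakCutDist (W₁ W₂ : ℝ → ℝ → ℝ) : ℝ :=
  ⨅ σ : {σ : ℝ → ℝ // MPB σ}, cutDist (fun x y => W₁ (σ.1 x) (σ.1 y)) W₂

/-- The step kernel `W_{Q_n}` associated to an `n × n` matrix `Q`:
it equals `Q i j` when `⌈n x⌉ = i, ⌈n y⌉ = j`. -/
def stepKernel (n : ℕ) (Q : Fin n → Fin n → ℝ) : ℝ → ℝ → ℝ := fun x y =>
  ∑ i : Fin n, ∑ j : Fin n,
    if x ∈ Set.Ioc (((i : ℕ) : ℝ)/n) ((((i : ℕ) : ℝ)+1)/n) ∧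
       y ∈ Set.Ioc (((j : ℕ) : ℝ)/n) ((((j : ℕ) : ℝ)+1)/n)
    then Q i j else 0

/-- Product over the edges of `H` (each edge counted once) of `f a b`. -/
def edgeProd {v : ℕ} (G : SimpleGraph (Fin v)) [DecidableRel G.Adj]
    (f : Fin v → Fin v → ℝ) : ℝ :=
  ∏ p ∈ Finset.univ.filter (fun p : Fin v × Fin v => G.Adj p.1 p.2 ∧ p.1 < p.2), f p.1 p.2

/-- The number of edges `|E(H)|`. -/
def edgeCard {v : ℕ} (G : SimpleGraph (Fin v)) [DecidableRel G.Adj] : ℕ :=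
  (Finset.univ.filter (fun p : Fin v × Fin v => G.Adj p.1 p.2 ∧ p.1 < p.2)).card

/-- The inhomogeneous U-statistic `U_n(X)` (sum over distinct indices). -/
def Ustat {X : Type*} {v : ℕ} (G : SimpleGraph (Fin v)) [DecidableRel G.Adj]
    (φ : (Fin v → X) → ℝ) (n : ℕ) (Q : Fin n → Fin n → ℝ) (x : Fin n → X) : ℝ :=
  (∑ i ∈ Finset.univ.filter (fun i : Fin v → Fin n => Function.Injective i),
      φ (x ∘ i) * edgeProd G (fun a b => Q (i a) (i b))) / (n : ℝ) ^ v

/-- The inhomogeneous V-statistic `V_n(X)` (sum over all indices). -/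
def Vstat {X : Type*} {v : ℕ} (G : SimpleGraph (Fin v)) [DecidableRel G.Adj]
    (φ : (Fin v → X) → ℝ) (n : ℕ) (Q : Fin n → Fin n → ℝ) (x : Fin n → X) : ℝ :=
  (∑ i : Fin v → Fin n, φ (x ∘ i) * edgeProd G (fun a b => Q (i a) (i b))) / (n : ℝ) ^ v

open Classical in
/-- Kullback-Leibler divergence `D(ν | ρ) ∈ [0,∞]`. -/
def KLdiv {α : Type*} [MeasurableSpace α] (ν ρ : Measure α) : ℝ≥0∞ :=
  if ν ≪ ρ ∧ Integrable (llr ν ρ) ν then ENNReal.ofReal (∫ a, llr ν ρ a ∂ν) else ⊤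

open Classical in
/-- `ν` itself if it is a probability measure, junk value `0` otherwise. -/
def probOr {α : Type*} [MeasurableSpace α] (ν : Measure α) : Measure α :=
  if IsProbabilityMeasure ν then ν else 0

instance {α : Type*} [MeasurableSpace α] (ν : Measure α) : SigmaFinite (probOr ν) := by
  unfold probOr
  split_ifs with h
  · haveI := h; infer_instance
  · infer_instance

/-- `v`-fold product of a (probability) measure. -/
def piProb {α : Type*} [MeasurableSpace α] (v : ℕ) (ν : Measure α) : Measure (Fin v → α) :=
  Measure.pi fun _ => probOr ν

/-- The functional `T_{W,φ}(ν) = E[φ(B₁,…,B_v) ∏_{(a,b) ∈ E(H)} W(A_a,A_b)]`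
for `(A_a,B_a)` i.i.d. with law `ν`. -/
def TWphi {X : Type*} [MeasurableSpace X] {v : ℕ} (G : SimpleGraph (Fin v))
    [DecidableRel G.Adj] (W : ℝ → ℝ → ℝ) (φ : (Fin v → X) → ℝ)
    (ν : Measure (ℝ × X)) : ℝ :=
  ∫ z : Fin v → ℝ × X,
    φ (fun a => (z a).2) * edgeProd G (fun a b => W (z a).1 (z b).1) ∂(piProb v ν)

/-- Membership in `𝒯ℳ`: probability measures on `[0,1] × 𝒳` whose first marginal
is uniform on `[0,1]`. -/
def inTM {X : Type*} [MeasurableSpace X] (ν : Measure (ℝ × X)) : Prop :=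
  IsProbabilityMeasure ν ∧ ν.map Prod.fst = unif01

/-- The rate function `I₀(t) = inf { D(ν|ρ) : ν ∈ 𝒯ℳ, D(ν|ρ) < ∞, T_{W,φ}(ν) = t }`. -/
def rate0 {X : Type*} [MeasurableSpace X] {v : ℕ} (G : SimpleGraph (Fin v))
    [DecidableRel G.Adj] (W : ℝ → ℝ → ℝ) (φ : (Fin v → X) → ℝ) (μ : Measure X)
    (t : ℝ) : ℝ≥0∞ :=
  ⨅ ν : {ν : Measure (ℝ × X) //
      inTM ν ∧ KLdiv ν (unif01.prod μ) ≠ ⊤ ∧ TWphi G W φ ν = t},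
    KLdiv ν.1 (unif01.prod μ)

/-- Tail assumption (T): `E_μ[e^{λ ψ(X)^p}] < ∞` for all `λ > 0`; for `p = ∞`
it means `ψ` is bounded. -/
def TailCond {X : Type*} [MeasurableSpace X] (μ : Measure X) (ψ : X → ℝ)
    (p : ℝ≥0∞) : Prop :=
  if p = ⊤ then ∃ C : ℝ, ∀ x, ψ x ≤ C
  else ∀ lam : ℝ, 0 < lam →
    ∫⁻ x, ENNReal.ofReal (Real.exp (lam * ψ x ^ p.toReal)) ∂μ < ⊤

/-- A sequence of random elements `T n` defined on probability spaces `(Ω n, P n)`,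
taking values in a topological space `E`, satisfies a large deviation principle at
speed `n` with good rate function `I`. -/
def SatisfiesLDP {E : Type*} [TopologicalSpace E] {Ω : ℕ → Type*}
    [∀ n, MeasurableSpace (Ω n)] (P : ∀ n, Measure (Ω n)) (T : ∀ n, Ω n → E)
    (I : E → ℝ≥0∞) : Prop :=
  (∀ c : ℝ≥0∞, c ≠ ⊤ → IsCompact {x | I x ≤ c}) ∧
  ∀ F : Set E, MeasurableSet[borel E] F →
    (-(⨅ x ∈ interior F, (I x : EReal)) ≤
      Filter.atTop.liminf fun n : ℕ =>
        (((n : ℝ)⁻¹ : ℝ) : EReal) * ENNReal.log (P n {ω | T n ω ∈ F})) ∧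
    (Filter.atTop.limsup (fun n : ℕ =>
        (((n : ℝ)⁻¹ : ℝ) : EReal) * ENNReal.log (P n {ω | T n ω ∈ F})) ≤
      -(⨅ x ∈ closure F, (I x : EReal)))

end

/-!
The two sums differ by the terms of the `v`-tuples with a repeated index, so, `φ` being bounded by
`L`, the quantity in question is at most `L` times the mean of `|∏ Q(i_a, i_b)|` restricted to such
tuples, uniformly in `x`. For independent uniform indices a repetition has probability at most
`v² / n`, so Hölder's inequality with exponent `q` leaves the factor `(v² / n) ^ (1 - 1/q)` and the
`q`-th moment of `∏ |Q(i_a, i_b)|`. Every vertex of `H` lies on at most `Δ` edges, so Finner's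
inequality (Hölder's inequality applied one coordinate at a time) with weight `1/Δ` on every edge
bounds that moment by the power `|E(H)| / Δ` of the mean of `|Q(i, j)| ^ (qΔ)`, which stays bounded.
-/

open ProbabilityTheory
open scoped Finset Topology

section Finner

variable {κ : Type*} {E : Finset κ} {p : κ → ℝ}

theorem lintegral_prod_rpow_le_of_sum_le_one {α : Type*} [MeasurableSpace α] {μ : Measure α}
    [IsProbabilityMeasure μ] {g : κ → α → ℝ≥0∞} (hg : ∀ e ∈ E, AEMeasurable (g e) μ)
    (hp : ∀ e ∈ E, 0 ≤ p e) (hsum : ∑ e ∈ E, p e ≤ 1) :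
    ∫⁻ y, ∏ e ∈ E, g e y ^ p e ∂μ ≤ ∏ e ∈ E, (∫⁻ y, g e y ∂μ) ^ p e := by
  simpa using ENNReal.lintegral_mul_prod_norm_pow_le E (g := fun _ => 1) aemeasurable_const hg
    (1 - ∑ e ∈ E, p e) (sub_add_cancel _ _) (sub_nonneg.2 hsum) hp

theorem lintegral_prod_rpow_le_of_forall_const {α : Type*} [MeasurableSpace α] {μ : Measure α}
    [IsProbabilityMeasure μ] {g : κ → α → ℝ≥0∞} (hg : ∀ e ∈ E, AEMeasurable (g e) μ)
    (hp : ∀ e ∈ E, 0 ≤ p e) {P : κ → Prop} [DecidablePred P]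
    (hconst : ∀ e ∈ E, ¬P e → ∀ y z, g e y = g e z) (hsum : ∑ e ∈ E with P e, p e ≤ 1) :
    ∫⁻ y, ∏ e ∈ E, g e y ^ p e ∂μ ≤ ∏ e ∈ E, (∫⁻ y, g e y ∂μ) ^ p e := by
  have hmean : ∀ y, ∏ e ∈ E with ¬P e, g e y ^ p e =
      ∏ e ∈ E with ¬P e, (∫⁻ z, g e z ∂μ) ^ p e := by
    refine fun y => Finset.prod_congr rfl fun e he => ?_
    obtain ⟨heE, heP⟩ := Finset.mem_filter.1 he
    simp [fun z => hconst e heE heP z y]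
  have hmeas : AEMeasurable (fun y => ∏ e ∈ E with P e, g e y ^ p e) μ :=
    Finset.aemeasurable_fun_prod _ fun e he => (hg e (Finset.mem_filter.1 he).1).pow_const _
  simp_rw [← Finset.prod_filter_mul_prod_filter_not E P, hmean]
  rw [lintegral_mul_const'' _ hmeas]
  gcongr
  exact lintegral_prod_rpow_le_of_sum_le_one (fun e he => hg e (Finset.mem_filter.1 he).1)
    (fun e he => hp e (Finset.mem_filter.1 he).1) hsum

variable {ι : Type*} [DecidableEq ι] {X : ι → Type*} [∀ i, MeasurableSpace (X i)]
  {μ : ∀ i, Measure (X i)}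

theorem dependsOn_lmarginal {f : (∀ i, X i) → ℝ≥0∞} {S : Set ι} (hf : DependsOn f S)
    (s : Finset ι) : DependsOn (∫⋯∫⁻_s, f ∂μ) (S \ s) :=
  fun _ _ hxy => lintegral_congr fun z => hf.updateFinset z hxy

variable [∀ i, IsProbabilityMeasure (μ i)] {f : κ → (∀ i, X i) → ℝ≥0∞} {S : κ → Finset ι}

theorem lmarginal_prod_rpow_le (hf : ∀ e ∈ E, Measurable (f e))
    (hS : ∀ e ∈ E, DependsOn (f e) (S e)) (hp : ∀ e ∈ E, 0 ≤ p e)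
    (hsum : ∀ i, ∑ e ∈ E with i ∈ S e, p e ≤ 1) (s : Finset ι) (x : ∀ i, X i) :
    (∫⋯∫⁻_s, (fun x => ∏ e ∈ E, f e x ^ p e) ∂μ) x ≤
      ∏ e ∈ E, ((∫⋯∫⁻_s, f e ∂μ) x) ^ p e := by
  induction s using Finset.induction generalizing x with
  | empty => simp
  | insert i s hi ih =>
    -- In the integral over coordinate `i` only the factors with `i ∈ S e` vary, and their exponents
    -- sum to at most `1`, so Hölder's inequality applies to them.
    have hconst : ∀ e ∈ E, i ∉ S e → ∀ y z, (∫⋯∫⁻_s, f e ∂μ) (Function.update x i y) =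
        (∫⋯∫⁻_s, f e ∂μ) (Function.update x i z) := fun e he hie y z =>
      dependsOn_lmarginal (hS e he) s fun j hj => by
        have hji : j ≠ i := by rintro rfl; exact hie hj.1
        simp [hji]
    calc (∫⋯∫⁻_insert i s, (fun x => ∏ e ∈ E, f e x ^ p e) ∂μ) x
        = ∫⁻ y, (∫⋯∫⁻_s, (fun x => ∏ e ∈ E, f e x ^ p e) ∂μ) (Function.update x i y) ∂μ i :=
          lmarginal_insert _ (Finset.measurable_fun_prod _ fun e he => (hf e he).pow_const _) hi x
      _ ≤ ∫⁻ y, ∏ e ∈ E, (∫⋯∫⁻_s, f e ∂μ) (Function.update x i y) ^ p e ∂μ i :=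
          lintegral_mono fun y => ih _
      _ ≤ ∏ e ∈ E, (∫⁻ y, (∫⋯∫⁻_s, f e ∂μ) (Function.update x i y) ∂μ i) ^ p e :=
          lintegral_prod_rpow_le_of_forall_const
            (fun e he => (((hf e he).lmarginal μ).comp (measurable_update x)).aemeasurable)
            hp hconst (hsum i)
      _ = ∏ e ∈ E, ((∫⋯∫⁻_insert i s, f e ∂μ) x) ^ p e :=
          Finset.prod_congr rfl fun e he => by rw [lmarginal_insert _ (hf e he) hi]

theorem lintegral_pi_prod_rpow_le [Fintype ι] (hf : ∀ e ∈ E, Measurable (f e))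
    (hS : ∀ e ∈ E, DependsOn (f e) (S e)) (hp : ∀ e ∈ E, 0 ≤ p e)
    (hsum : ∀ i, ∑ e ∈ E with i ∈ S e, p e ≤ 1) :
    ∫⁻ x, ∏ e ∈ E, f e x ^ p e ∂Measure.pi μ ≤ ∏ e ∈ E, (∫⁻ x, f e x ∂Measure.pi μ) ^ p e := by
  obtain ⟨x⟩ := (Measure.pi μ).nonempty_of_neZero
  simpa using lmarginal_prod_rpow_le (μ := μ) hf hS hp hsum Finset.univ x

end Finner

section Pairs

variable {ι : Type*} [Fintype ι] {E : Finset (ι × ι)} {d : ℕ}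

theorem lintegral_pi_eval_eval {X : ι → Type*} [∀ i, MeasurableSpace (X i)]
    {μ : ∀ i, Measure (X i)} [∀ i, IsProbabilityMeasure (μ i)] {i j : ι} (hij : i ≠ j)
    {F : X i × X j → ℝ≥0∞} (hF : Measurable F) :
    ∫⁻ x, F (x i, x j) ∂Measure.pi μ = ∫⁻ z, F z ∂(μ i).prod (μ j) := by
  rw [← Measure.infinitePi_map_eval_prod hij, Measure.infinitePi_eq_pi,
    lintegral_map hF (by fun_prop)]

theorem lintegral_pi_prod_pair_le [DecidableEq ι] {X : ι → Type*} [∀ i, MeasurableSpace (X i)]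
    {μ : ∀ i, Measure (X i)} [∀ i, IsProbabilityMeasure (μ i)] (hE : ∀ e ∈ E, e.1 ≠ e.2)
    (hd : ∀ i, #{e ∈ E | i = e.1 ∨ i = e.2} ≤ d) {W : ∀ e : ι × ι, X e.1 × X e.2 → ℝ≥0∞}
    (hW : ∀ e ∈ E, Measurable (W e)) :
    ∫⁻ x, ∏ e ∈ E, W e (x e.1, x e.2) ∂Measure.pi μ ≤
      ∏ e ∈ E, (∫⁻ z, W e z ^ (d : ℝ) ∂(μ e.1).prod (μ e.2)) ^ (d : ℝ)⁻¹ := by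
  have hd_pos : ∀ e ∈ E, 0 < d := fun e he =>
    (Finset.card_pos.2 ⟨e, by simp [he]⟩).trans_le (hd e.1)
  have hWd : ∀ e ∈ E, Measurable fun z => W e z ^ (d : ℝ) := fun e he => (hW e he).pow_const _
  calc ∫⁻ x, ∏ e ∈ E, W e (x e.1, x e.2) ∂Measure.pi μ
      = ∫⁻ x, ∏ e ∈ E, (W e (x e.1, x e.2) ^ (d : ℝ)) ^ (d : ℝ)⁻¹ ∂Measure.pi μ :=
        lintegral_congr fun x => Finset.prod_congr rfl fun e he =>
          (ENNReal.rpow_rpow_inv (Nat.cast_ne_zero.2 (hd_pos e he).ne') _).symm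
    _ ≤ ∏ e ∈ E, (∫⁻ x, W e (x e.1, x e.2) ^ (d : ℝ) ∂Measure.pi μ) ^ (d : ℝ)⁻¹ := by
        refine lintegral_pi_prod_rpow_le (S := fun e => {e.1, e.2})
          (fun e he => (hWd e he).comp (by fun_prop))
          (fun e _ x y hxy => by simp [hxy e.1, hxy e.2]) (fun _ _ => by positivity) fun i => ?_
        simpa [← div_eq_mul_inv] using div_le_one_of_le₀ (Nat.cast_le.2 (hd i)) d.cast_nonneg
    _ = ∏ e ∈ E, (∫⁻ z, W e z ^ (d : ℝ) ∂(μ e.1).prod (μ e.2)) ^ (d : ℝ)⁻¹ :=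
        Finset.prod_congr rfl fun e he => by rw [lintegral_pi_eval_eval (hE e he) (hWd e he)]

theorem setLIntegral_le_measure_rpow_mul {Ω : Type*} [MeasurableSpace Ω] {μ : Measure Ω}
    {f : Ω → ℝ≥0∞} (hf : AEMeasurable f μ) (A : Set Ω) {q : ℝ} (hq : 1 ≤ q) :
    ∫⁻ x in A, f x ∂μ ≤ μ A ^ (1 - q⁻¹) * (∫⁻ x, f x ^ q ∂μ) ^ q⁻¹ := by
  have hq0 : 0 < q := by positivity
  calc ∫⁻ x in A, f x ∂μ = ∫⁻ x in A, 1 ^ (1 - q⁻¹) * (f x ^ q) ^ q⁻¹ ∂μ := by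
        simp [ENNReal.rpow_rpow_inv hq0.ne']
    _ ≤ (∫⁻ _ in A, 1 ∂μ) ^ (1 - q⁻¹) * (∫⁻ x in A, f x ^ q ∂μ) ^ q⁻¹ :=
        ENNReal.lintegral_mul_norm_pow_le aemeasurable_const (hf.restrict.pow_const q)
          (sub_nonneg.2 (inv_le_one_of_one_le₀ hq)) (by positivity) (sub_add_cancel _ _)
    _ ≤ μ A ^ (1 - q⁻¹) * (∫⁻ x, f x ^ q ∂μ) ^ q⁻¹ := by
        rw [setLIntegral_one]
        gcongr
        exact Measure.restrict_le_self

variable {α : Type*} [MeasurableSpace α] [MeasurableEq α] {μ : Measure α} [IsProbabilityMeasure μ]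

theorem measure_pi_not_injective_le :
    Measure.pi (fun _ : ι => μ) {x | ¬Function.Injective x} ≤
      Fintype.card ι ^ 2 * (μ.prod μ) (diagonal α) := by
  classical
  have hcollide : ∀ i j : ι, i ≠ j →
      Measure.pi (fun _ : ι => μ) {x | x i = x j} = (μ.prod μ) (diagonal α) := fun i j hij => by
    rw [← Measure.infinitePi_map_eval_prod (P := fun _ : ι => μ) hij, Measure.infinitePi_eq_pi,
      Measure.map_apply (by fun_prop) measurableSet_diagonal]
    rfl
  have hcover : {x : ι → α | ¬Function.Injective x} ⊆
      ⋃ e ∈ (Finset.univ : Finset ι).offDiag, {x | x e.1 = x e.2} := fun x hx => by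
    obtain ⟨i, j, hxij, hij⟩ := Function.not_injective_iff.1 hx
    simpa using ⟨i, j, hij, hxij⟩
  calc Measure.pi (fun _ : ι => μ) {x | ¬Function.Injective x}
      ≤ ∑ e ∈ (Finset.univ : Finset ι).offDiag, Measure.pi (fun _ : ι => μ) {x | x e.1 = x e.2} :=
        (measure_mono hcover).trans (measure_biUnion_finset_le _ _)
    _ = #(Finset.univ : Finset ι).offDiag * (μ.prod μ) (diagonal α) := by
        rw [Finset.sum_congr rfl fun e he => hcollide e.1 e.2 (by simpa using he),
          Finset.sum_const, nsmul_eq_mul]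
    _ ≤ Fintype.card ι ^ 2 * (μ.prod μ) (diagonal α) := by
        gcongr
        rw [Finset.offDiag_card, sq]
        exact_mod_cast Nat.sub_le _ _

theorem setLIntegral_not_injective_prod_pair_le [DecidableEq ι]
    (hE : ∀ e ∈ E, e.1 ≠ e.2) (hd : ∀ i, #{e ∈ E | i = e.1 ∨ i = e.2} ≤ d)
    {W : α × α → ℝ≥0∞} (hW : Measurable W) {q : ℝ} (hq : 1 ≤ q) :
    ∫⁻ x in {x : ι → α | ¬Function.Injective x}, ∏ e ∈ E, W (x e.1, x e.2)
        ∂Measure.pi (fun _ => μ) ≤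
      (Fintype.card ι ^ 2 * (μ.prod μ) (diagonal α)) ^ (1 - q⁻¹) *
        (((∫⁻ z, W z ^ (q * d) ∂μ.prod μ) ^ (d : ℝ)⁻¹) ^ #E) ^ q⁻¹ := by
  have hq0 : 0 < q := by positivity
  have hmoment : ∫⁻ x : ι → α, (∏ e ∈ E, W (x e.1, x e.2)) ^ q ∂Measure.pi (fun _ => μ) ≤
      ((∫⁻ z, W z ^ (q * d) ∂μ.prod μ) ^ (d : ℝ)⁻¹) ^ #E := by
    simpa [ENNReal.prod_rpow_of_nonneg hq0.le, ENNReal.rpow_mul] using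
      lintegral_pi_prod_pair_le (μ := fun _ => μ) hE hd (W := fun _ z => W z ^ q)
        fun _ _ => hW.pow_const q
  refine (setLIntegral_le_measure_rpow_mul (Measurable.aemeasurable (by fun_prop)) _ hq).trans ?_
  gcongr
  · exact sub_nonneg.2 (inv_le_one_of_one_le₀ hq)
  · exact measure_pi_not_injective_le

end Pairs

section Uniform

variable {Ω : Type*} [Fintype Ω] [MeasurableSpace Ω] [MeasurableSingletonClass Ω]

theorem setLIntegral_uniformOn_univ (f : Ω → ℝ≥0∞) (P : Ω → Prop) [DecidablePred P] :
    ∫⁻ x in {x | P x}, f x ∂uniformOn univ = (∑ x with P x, f x) / Fintype.card Ω := by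
  rw [← lintegral_indicator (Set.toFinite _).measurableSet, lintegral_fintype, Finset.sum_filter,
    ENNReal.div_eq_inv_mul, Finset.mul_sum]
  refine Finset.sum_congr rfl fun x _ => ?_
  simp [uniformOn_univ, Set.indicator_apply, mul_comm]

theorem lintegral_uniformOn_univ (f : Ω → ℝ≥0∞) :
    ∫⁻ x, f x ∂uniformOn univ = (∑ x, f x) / Fintype.card Ω := by
  simpa using setLIntegral_uniformOn_univ f fun _ => True

variable [Nonempty Ω]

theorem lintegral_prod_uniformOn_univ (F : Ω × Ω → ℝ≥0∞) :
    ∫⁻ z, F z ∂(uniformOn univ).prod (uniformOn univ) =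
      (∑ x, ∑ y, F (x, y)) / (Fintype.card Ω : ℝ≥0∞) ^ 2 := by
  have hF : Measurable F := measurable_of_finite F
  simp_rw [lintegral_prod _ hF.aemeasurable, lintegral_uniformOn_univ, div_eq_mul_inv,
    ← Finset.sum_mul, mul_assoc, sq]
  rw [ENNReal.mul_inv (by simp) (by simp)]

theorem prod_uniformOn_univ_diagonal :
    ((uniformOn univ).prod (uniformOn univ)) (diagonal Ω) = (Fintype.card Ω : ℝ≥0∞)⁻¹ := by
  classical
  rw [← lintegral_indicator_one measurableSet_diagonal, lintegral_prod_uniformOn_univ]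
  simp [Set.indicator_apply, sq, ENNReal.mul_inv, ENNReal.div_eq_inv_mul, mul_assoc,
    ENNReal.inv_mul_cancel]

end Uniform

section OrientedEdges

variable {V : Type*} [Fintype V] [LinearOrder V] (G : SimpleGraph V) [DecidableRel G.Adj]

/-- The edges of `G`, each listed once as the pair of its smaller and its larger endpoint. -/
def orientedEdges : Finset (V × V) :=
  {e | G.Adj e.1 e.2 ∧ e.1 < e.2}

theorem ne_of_mem_orientedEdges {e : V × V} (he : e ∈ orientedEdges G) : e.1 ≠ e.2 :=
  (Finset.mem_filter.1 he).2.2.ne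

theorem card_filter_orientedEdges_le_degree (a : V) :
    #{e ∈ orientedEdges G | a = e.1 ∨ a = e.2} ≤ G.degree a := by
  rw [← G.card_incidenceFinset_eq_degree]
  refine Finset.card_le_card_of_injOn (fun e => s(e.1, e.2)) (fun e he => ?_)
    fun e he e' he' hee' => ?_
  · obtain ⟨heE, hea⟩ := Finset.mem_filter.1 he
    simpa [SimpleGraph.mk'_mem_incidenceSet_iff] using ⟨(Finset.mem_filter.1 heE).2.1, hea⟩
  · have hlt : e.1 < e.2 := (Finset.mem_filter.1 (Finset.mem_filter.1 he).1).2.2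
    have hlt' : e'.1 < e'.2 := (Finset.mem_filter.1 (Finset.mem_filter.1 he').1).2.2
    rcases Sym2.eq_iff.1 hee' with ⟨h₁, h₂⟩ | ⟨h₁, h₂⟩
    · exact Prod.ext h₁ h₂
    · exact absurd (h₁ ▸ h₂ ▸ hlt) hlt'.asymm

end OrientedEdges

section CollisionMean

variable {v n : ℕ} (G : SimpleGraph (Fin v)) [DecidableRel G.Adj]

/-- The contribution of the tuples with a repeated index to the mean of `|∏ Q(i_a, i_b)|` over all
`v`-tuples of indices. It dominates the normalized difference of the U- and V-sums. -/
noncomputable def collisionMean (Q : Fin n → Fin n → ℝ) : ℝ≥0∞ :=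
  (∑ i : Fin v → Fin n with ¬Function.Injective i, ‖edgeProd G fun a b => Q (i a) (i b)‖ₑ) /
    (n : ℝ≥0∞) ^ v

/-- The mean of `|Q(i, j)| ^ r` over all entries of the matrix, that is `‖W_Q‖_r ^ r` for the
associated step kernel `W_Q`. -/
noncomputable def entryMoment (Q : Fin n → Fin n → ℝ) (r : ℝ) : ℝ≥0∞ :=
  (∑ i, ∑ j, ENNReal.ofReal (|Q i j| ^ r)) / (n : ℝ≥0∞) ^ 2

theorem entryMoment_eq_lintegral [NeZero n] (Q : Fin n → Fin n → ℝ) {r : ℝ} (hr : 0 ≤ r) :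
    entryMoment Q r =
      ∫⁻ z, ‖Q z.1 z.2‖ₑ ^ r ∂(uniformOn univ).prod (uniformOn univ) := by
  simp [entryMoment, lintegral_prod_uniformOn_univ, Real.enorm_eq_ofReal_abs,
    ENNReal.ofReal_rpow_of_nonneg, hr]

theorem enorm_edgeProd (f : Fin v → Fin v → ℝ) :
    ‖edgeProd G f‖ₑ = ∏ e ∈ orientedEdges G, ‖f e.1 e.2‖ₑ := by
  simp_rw [Real.enorm_eq_ofReal_abs]
  rw [edgeProd, Finset.abs_prod, ENNReal.ofReal_prod_of_nonneg fun _ _ => abs_nonneg _]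
  rfl

theorem collisionMean_eq_setLIntegral (Q : Fin n → Fin n → ℝ) :
    collisionMean G Q = ∫⁻ i in {i : Fin v → Fin n | ¬Function.Injective i},
      ∏ e ∈ orientedEdges G, ‖Q (i e.1) (i e.2)‖ₑ ∂Measure.pi fun _ => uniformOn univ := by
  rw [← uniformOn_pi, pi_univ, setLIntegral_uniformOn_univ]
  simp [collisionMean, enorm_edgeProd]

theorem collisionMean_le [NeZero n] (Q : Fin n → Fin n → ℝ) {q : ℝ} (hq : 1 ≤ q) :
    collisionMean G Q ≤ ((v : ℝ≥0∞) ^ 2 * (n : ℝ≥0∞)⁻¹) ^ (1 - q⁻¹) *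
      ((entryMoment Q (q * G.maxDegree) ^ (G.maxDegree : ℝ)⁻¹) ^ #(orientedEdges G)) ^ q⁻¹ := by
  rw [collisionMean_eq_setLIntegral, entryMoment_eq_lintegral Q (by positivity)]
  simpa [prod_uniformOn_univ_diagonal] using
    setLIntegral_not_injective_prod_pair_le (μ := uniformOn univ)
      (fun _ => ne_of_mem_orientedEdges G)
      (fun a => (card_filter_orientedEdges_le_degree G a).trans (G.degree_le_maxDegree a))
      (W := fun z => ‖Q z.1 z.2‖ₑ) (measurable_of_finite _) hq

theorem tendsto_collisionMean {Q : ∀ n, Fin n → Fin n → ℝ} {q : ℝ} (hq : 1 < q)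
    (hQ : limsup (fun n => entryMoment (Q n) (q * G.maxDegree)) atTop ≠ ⊤) :
    Tendsto (fun n => collisionMean G (Q n)) atTop (𝓝 0) := by
  obtain ⟨C, hQC, hC⟩ := exists_between (lt_top_iff_ne_top.2 hQ)
  set K : ℝ≥0∞ := ((C ^ (G.maxDegree : ℝ)⁻¹) ^ #(orientedEdges G)) ^ q⁻¹ with hK
  have hK_ne_top : K ≠ ⊤ :=
    ENNReal.rpow_ne_top_of_nonneg (by positivity) <| ENNReal.pow_ne_top <|
      ENNReal.rpow_ne_top_of_nonneg (by positivity) hC.ne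
  have hbound : ∀ᶠ n : ℕ in atTop, collisionMean G (Q n) ≤
      ((v : ℝ≥0∞) ^ 2 * (n : ℝ≥0∞)⁻¹) ^ (1 - q⁻¹) * K := by
    filter_upwards [eventually_lt_of_limsup_lt hQC, eventually_ne_atTop 0] with n hn hn0
    have : NeZero n := ⟨hn0⟩
    refine (collisionMean_le G (Q n) hq.le).trans ?_
    rw [hK]
    gcongr
  have hrate : Tendsto (fun n : ℕ => (v : ℝ≥0∞) ^ 2 * (n : ℝ≥0∞)⁻¹) atTop (𝓝 0) := by
    simpa using ENNReal.Tendsto.const_mul (a := (v : ℝ≥0∞) ^ 2)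
      ENNReal.tendsto_inv_nat_nhds_zero (Or.inr (by simp))
  have hlim : Tendsto (fun n : ℕ => ((v : ℝ≥0∞) ^ 2 * (n : ℝ≥0∞)⁻¹) ^ (1 - q⁻¹) * K)
      atTop (𝓝 0) := by
    simpa [sub_pos.2 (inv_lt_one_of_one_lt₀ hq)] using
      ENNReal.Tendsto.mul_const (hrate.ennrpow_const (1 - q⁻¹)) (Or.inr hK_ne_top)
  exact tendsto_of_tendsto_of_tendsto_of_le_of_le' tendsto_const_nhds hlim
    (Eventually.of_forall fun _ => zero_le) hbound

theorem toReal_collisionMean (Q : Fin n → Fin n → ℝ) :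
    (collisionMean G Q).toReal = (∑ i : Fin v → Fin n with ¬Function.Injective i,
      |edgeProd G fun a b => Q (i a) (i b)|) / (n : ℝ) ^ v := by
  simp [collisionMean, ENNReal.toReal_sum]

end CollisionMean

theorem abs_sum_filter_sub_sum_le {ι : Type*} [Fintype ι] (P : ι → Prop) [DecidablePred P]
    {c f : ι → ℝ} {L : ℝ} (hc : ∀ i, |c i| ≤ L) :
    |(∑ i with P i, c i * f i) - ∑ i, c i * f i| ≤ L * ∑ i with ¬P i, |f i| := by
  rw [← Finset.sum_filter_add_sum_filter_not Finset.univ P, sub_add_cancel_left, abs_neg,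
    Finset.mul_sum]
  refine (Finset.abs_sum_le_sum_abs _ _).trans (Finset.sum_le_sum fun i _ => ?_)
  rw [abs_mul]
  gcongr
  exact hc i

theorem U_V_sums_uniformly_close_general
    {X : Type*} [Nonempty X] {v : ℕ} (G : SimpleGraph (Fin v)) [DecidableRel G.Adj]
    {L : ℝ} {φ : (Fin v → X) → ℝ} (hφ : ∀ y, |φ y| ≤ L)
    {Q : ∀ n : ℕ, Fin n → Fin n → ℝ} {q : ℝ} (hq : 1 < q)
    (hnorm : Filter.atTop.limsup (fun n : ℕ =>
        (∑ i : Fin n, ∑ j : Fin n,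
          ENNReal.ofReal (|Q n i j| ^ (q * (G.maxDegree : ℝ)))) / ((n : ℝ≥0∞) ^ 2)) ≠ ⊤) :
    Tendsto (fun n : ℕ =>
        (⨆ x : Fin n → X,
          |(∑ i ∈ Finset.univ.filter (fun i : Fin v → Fin n => Function.Injective i),
              φ (x ∘ i) * edgeProd G (fun a b => Q n (i a) (i b))) -
            ∑ i : Fin v → Fin n, φ (x ∘ i) * edgeProd G (fun a b => Q n (i a) (i b))|) /
          (n : ℝ) ^ v)
      atTop (𝓝 0) := by
  have hlim : Tendsto (fun n => L * (collisionMean G (Q n)).toReal) atTop (𝓝 0) := by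
    simpa using ((ENNReal.tendsto_toReal ENNReal.zero_ne_top).comp
      (tendsto_collisionMean G hq hnorm)).const_mul L
  refine squeeze_zero (fun n => ?_) (fun n => ?_) hlim
  · exact div_nonneg (Real.iSup_nonneg fun _ => abs_nonneg _) (by positivity)
  · rw [toReal_collisionMean, ← mul_div_assoc]
    gcongr
    exact ciSup_le fun x => abs_sum_filter_sub_sum_le _ fun _ => hφ _

/-- Lemma 2.7: uniform closeness of the U- and V-sums. -/
theorem U_V_sums_uniformly_close
    {X : Type*} [Nonempty X]
    {v : ℕ} (hv : 2 ≤ v) (G : SimpleGraph (Fin v)) [DecidableRel G.Adj]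
    (L : ℝ) (hL : 0 < L) (φ : (Fin v → X) → ℝ) (hφ : ∀ y, |φ y| ≤ L)
    (Q : ∀ n : ℕ, Fin n → Fin n → ℝ)
    (hQsymm : ∀ n i j, Q n i j = Q n j i) (hQzero : ∀ n i, Q n i i = 0)
    (q : ℝ) (hq : 1 < q)
    (hnorm : Filter.atTop.limsup (fun n : ℕ =>
        (∑ i : Fin n, ∑ j : Fin n,
          ENNReal.ofReal (|Q n i j| ^ (q * (G.maxDegree : ℝ)))) / ((n : ℝ≥0∞) ^ 2)) ≠ ⊤) :
    Tendsto (fun n : ℕ =>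
        (⨆ x : Fin n → X,
          |(∑ i ∈ Finset.univ.filter (fun i : Fin v → Fin n => Function.Injective i),
              φ (x ∘ i) * edgeProd G (fun a b => Q n (i a) (i b))) -
            ∑ i : Fin v → Fin n, φ (x ∘ i) * edgeProd G (fun a b => Q n (i a) (i b))|) /
          (n : ℝ) ^ v)
      atTop (nhds 0) :=
  U_V_sums_uniformly_close_general G hφ hq hnorm
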